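/- Let (Q,·,e) be a loop with nuclear squares, i.e., x·x ∈ Nuc_ℓ(Q) ∩ Nuc_m(Q) ∩ Nuc_r(Q) for all x ∈ Q. Then the nucleus Nuc(Q) = Nuc_ℓ(Q) ∩ Nuc_m(Q) ∩ Nuc_r(Q) is a normal subloop of Q. -/

import Mathlib

/-- A loop `(Q, ·, e)`: a quasigroup with two-sided identity, presented with
explicit left division `ldiv a b = a \ b` and right division `rdiv b a = b / a`. -/
structure LoopStr (Q : Type*) where
  mul : Q → Q → Q
  e : Q
  ldiv : Q → Q → Q
  rdiv : Q → Q → Q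
  one_mul : ∀ x, mul e x = x
  mul_one : ∀ x, mul x e = x
  mul_ldiv : ∀ a b, mul a (ldiv a b) = b
  ldiv_mul : ∀ a b, ldiv a (mul a b) = b
  rdiv_mul : ∀ a b, mul (rdiv b a) a = b
  mul_rdiv : ∀ a b, rdiv (mul b a) a = b

namespace LoopStr

variable {Q : Type*} (S : LoopStr Q)

/-- The left inverse `x^ℓ = e / x`. -/
def linv (x : Q) : Q := S.rdiv S.e x

/-- The right inverse `x^r = x \ e`. -/
def rinv (x : Q) : Q := S.ldiv x S.e

/-- The left nucleus. -/
def lnuc : Set Q := {a | ∀ x y, S.mul (S.mul a x) y = S.mul a (S.mul x y)}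

/-- The middle nucleus. -/
def mnuc : Set Q := {a | ∀ x y, S.mul (S.mul x a) y = S.mul x (S.mul a y)}

/-- The right nucleus. -/
def rnuc : Set Q := {a | ∀ x y, S.mul (S.mul x y) a = S.mul x (S.mul y a)}

/-- The commutant `C(Q)`. -/
def commutant : Set Q := {a | ∀ x, S.mul a x = S.mul x a}

/-- The center `Z(Q) = C(Q) ∩ Nuc_ℓ ∩ Nuc_m ∩ Nuc_r`. -/
def center : Set Q := S.commutant ∩ S.lnuc ∩ S.mnuc ∩ S.rnuc

/-- The left translation `L_a` as a map. -/
def leftMul (a : Q) : Q → Q := fun x => S.mul a x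

/-- The left translation `L_a` as a permutation of `Q`. -/
def leftPerm (a : Q) : Equiv.Perm Q :=
  ⟨fun x => S.mul a x, fun x => S.ldiv a x, S.ldiv_mul a, S.mul_ldiv a⟩

/-- The right translation `R_a` as a permutation of `Q`. -/
def rightPerm (a : Q) : Equiv.Perm Q :=
  ⟨fun x => S.mul x a, fun x => S.rdiv x a, fun x => S.mul_rdiv a x, fun x => S.rdiv_mul a x⟩

/-- The multiplication group `Mlt(Q) = ⟨L_x, R_x : x ∈ Q⟩ ≤ Sym(Q)`. -/
def Mlt : Subgroup (Equiv.Perm Q) :=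
  Subgroup.closure (Set.range S.leftPerm ∪ Set.range S.rightPerm)

/-- `x^n = L_x^n(e)` for natural `n`. -/
def npow (a : Q) (n : ℕ) : Q := (S.leftPerm a ^ n) S.e

/-- `x^n = L_x^n(e)` for integer `n`. -/
def zpow (a : Q) (n : ℤ) : Q := (S.leftPerm a ^ n) S.e

/-- The order of an element: the least `n > 0` with `x^n = e` (or `0` if none exists). -/
noncomputable def lorder (a : Q) : ℕ := sInf {n : ℕ | 0 < n ∧ S.npow a n = S.e}

/-- A subloop: contains `e`, closed under multiplication and both divisions. -/
def IsSubloop (N : Set Q) : Prop :=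
  S.e ∈ N ∧ (∀ a ∈ N, ∀ b ∈ N, S.mul a b ∈ N) ∧
    (∀ a ∈ N, ∀ b ∈ N, S.ldiv a b ∈ N) ∧ (∀ a ∈ N, ∀ b ∈ N, S.rdiv a b ∈ N)

/-- A normal subloop: a subloop with `xN = Nx`, `(xN)y = x(Ny)`, `N(xy) = (Nx)y`
elementwise as sets. -/
def IsNormalSubloop (N : Set Q) : Prop :=
  S.IsSubloop N ∧
  (∀ x : Q, (fun a => S.mul x a) '' N = (fun a => S.mul a x) '' N) ∧
  (∀ x y : Q, (fun a => S.mul (S.mul x a) y) '' N = (fun a => S.mul x (S.mul a y)) '' N) ∧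
  (∀ x y : Q, (fun a => S.mul a (S.mul x y)) '' N = (fun a => S.mul (S.mul a x) y) '' N)

/-- A loop is simple if its only normal subloops are `{e}` and `Q`. -/
def IsSimple : Prop :=
  ∀ N : Set Q, S.IsNormalSubloop N → N = {S.e} ∨ N = Set.univ

lemma mul_rinv (x : Q) : S.mul x (S.rinv x) = S.e := S.mul_ldiv x S.e

lemma linv_mul (x : Q) : S.mul (S.linv x) x = S.e := S.rdiv_mul x S.e

lemma linv_rinv (x : Q) : S.linv (S.rinv x) = x := by
  have h := S.mul_rdiv (S.rinv x) x
  rw [S.mul_rinv] at h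
  exact h

lemma rinv_linv (x : Q) : S.rinv (S.linv x) = x := by
  have h := S.ldiv_mul (S.linv x) x
  rw [S.linv_mul] at h
  exact h

lemma rinv_e : S.rinv S.e = S.e := by
  have h := S.ldiv_mul S.e S.e
  rw [S.one_mul] at h
  exact h

lemma rdiv_e (x : Q) : S.rdiv x S.e = x := by
  have h := S.mul_rdiv S.e x
  rw [S.mul_one] at h
  exact h

/-- The principal right isostrophe `(Q, ∘)` of `(Q, ·)`, with `x ∘ y = x / (y^r)`,
right division `x // y = x·(y^r)` and left division `x \\ y = (y \ x)^ℓ`. -/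
def iso : LoopStr Q where
  mul x y := S.rdiv x (S.rinv y)
  e := S.e
  ldiv x y := S.linv (S.ldiv y x)
  rdiv x y := S.mul x (S.rinv y)
  one_mul x := S.linv_rinv x
  mul_one x := by
    show S.rdiv x (S.rinv S.e) = x
    rw [S.rinv_e, S.rdiv_e]
  mul_ldiv a b := by
    show S.rdiv a (S.rinv (S.linv (S.ldiv b a))) = b
    rw [S.rinv_linv]
    have h := S.mul_rdiv (S.ldiv b a) b
    rw [S.mul_ldiv] at h
    exact h
  ldiv_mul a b := by
    show S.linv (S.ldiv (S.rdiv a (S.rinv b)) a) = b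
    have h := S.ldiv_mul (S.rdiv a (S.rinv b)) (S.rinv b)
    rw [S.rdiv_mul] at h
    rw [h, S.linv_rinv]
  rdiv_mul a b := by
    show S.rdiv (S.mul b (S.rinv a)) (S.rinv a) = b
    exact S.mul_rdiv (S.rinv a) b
  mul_rdiv a b := by
    show S.mul (S.rdiv b (S.rinv a)) (S.rinv a) = b
    exact S.rdiv_mul (S.rinv a) b

end LoopStr

namespace LoopStr

variable {Q : Type*} (S : LoopStr Q)

/-- The nucleus `Nuc(Q) = Nuc_ℓ(Q) ∩ Nuc_m(Q) ∩ Nuc_r(Q)`. -/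
abbrev nuc : Set Q := S.lnuc ∩ S.mnuc ∩ S.rnuc

variable {S}

lemma mul_left_cancel {a x y : Q} (h : S.mul a x = S.mul a y) : x = y := by
  rw [← S.ldiv_mul a x, h, S.ldiv_mul]

lemma mul_right_cancel {a x y : Q} (h : S.mul x a = S.mul y a) : x = y := by
  rw [← S.mul_rdiv a x, h, S.mul_rdiv]

lemma nuc_left {a : Q} (ha : a ∈ S.nuc) (x y : Q) :
    S.mul (S.mul a x) y = S.mul a (S.mul x y) := ha.1.1 x y

lemma nuc_mid {a : Q} (ha : a ∈ S.nuc) (x y : Q) :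
    S.mul (S.mul x a) y = S.mul x (S.mul a y) := ha.1.2 x y

lemma nuc_right {a : Q} (ha : a ∈ S.nuc) (x y : Q) :
    S.mul (S.mul x y) a = S.mul x (S.mul y a) := ha.2 x y

lemma e_mem_nuc : S.e ∈ S.nuc :=
  ⟨⟨fun x y => by rw [S.one_mul, S.one_mul], fun x y => by rw [S.one_mul, S.mul_one]⟩,
    fun x y => by rw [S.mul_one, S.mul_one]⟩

lemma mul_mem_nuc {a b : Q} (ha : a ∈ S.nuc) (hb : b ∈ S.nuc) : S.mul a b ∈ S.nuc := by
  refine ⟨⟨fun x y => ?_, fun x y => ?_⟩, fun x y => ?_⟩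
  · rw [nuc_left ha, nuc_left ha, nuc_left ha, nuc_left hb]
  · rw [← nuc_right hb, nuc_mid hb, nuc_mid ha, nuc_left ha]
  · rw [← nuc_right hb, ← nuc_right hb, nuc_right ha, nuc_right hb]

lemma rinv_mul_of_mem_nuc {a : Q} (ha : a ∈ S.nuc) : S.mul (S.rinv a) a = S.e := by
  apply mul_left_cancel (a := a)
  rw [← nuc_left ha, S.mul_rinv, S.one_mul, S.mul_one]

lemma rinv_mem_nuc {a : Q} (ha : a ∈ S.nuc) : S.rinv a ∈ S.nuc := by
  refine ⟨⟨fun x y => ?_, fun x y => ?_⟩, fun x y => ?_⟩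
  · apply mul_left_cancel (a := a)
    rw [← nuc_left ha, ← nuc_left ha, ← nuc_left ha, S.mul_rinv, S.one_mul, S.one_mul]
  · have hx : S.mul (S.mul x (S.rinv a)) a = x := by
      rw [nuc_right ha, rinv_mul_of_mem_nuc ha, S.mul_one]
    have hy : S.mul a (S.mul (S.rinv a) y) = y := by
      rw [← nuc_left ha, S.mul_rinv, S.one_mul]
    calc S.mul (S.mul x (S.rinv a)) y
        = S.mul (S.mul x (S.rinv a)) (S.mul a (S.mul (S.rinv a) y)) := by rw [hy]
      _ = S.mul (S.mul (S.mul x (S.rinv a)) a) (S.mul (S.rinv a) y) := (nuc_mid ha _ _).symm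
      _ = S.mul x (S.mul (S.rinv a) y) := by rw [hx]
  · apply mul_right_cancel (a := a)
    rw [nuc_right ha, nuc_right ha, nuc_right ha, rinv_mul_of_mem_nuc ha, S.mul_one, S.mul_one]

lemma ldiv_eq_of_mem_nuc {a : Q} (ha : a ∈ S.nuc) (b : Q) :
    S.ldiv a b = S.mul (S.rinv a) b := by
  apply mul_left_cancel (a := a)
  rw [S.mul_ldiv, ← nuc_left ha, S.mul_rinv, S.one_mul]

lemma rdiv_eq_of_mem_nuc {a : Q} (ha : a ∈ S.nuc) (b : Q) :
    S.rdiv b a = S.mul b (S.rinv a) := by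
  apply mul_right_cancel (a := a)
  rw [S.rdiv_mul, nuc_right ha, rinv_mul_of_mem_nuc ha, S.mul_one]

lemma isSubloop_nuc : S.IsSubloop S.nuc := by
  refine ⟨e_mem_nuc, fun a ha b hb => mul_mem_nuc ha hb, fun a ha b hb => ?_,
    fun a ha b hb => ?_⟩
  · rw [ldiv_eq_of_mem_nuc ha]
    exact mul_mem_nuc (rinv_mem_nuc ha) hb
  · rw [rdiv_eq_of_mem_nuc hb]
    exact mul_mem_nuc ha (rinv_mem_nuc hb)

/-- If squares are nuclear, then so is `(xn)x` for nuclear `n`, since `(nx)(nx) = n((xn)x)`. -/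
lemma mul_mul_mem_nuc (h : ∀ x : Q, S.mul x x ∈ S.nuc) (x : Q) {n : Q} (hn : n ∈ S.nuc) :
    S.mul (S.mul x n) x ∈ S.nuc := by
  have hsq : S.mul n (S.mul (S.mul x n) x) ∈ S.nuc := by
    rw [nuc_mid hn, ← nuc_left hn]
    exact h (S.mul n x)
  rw [← S.ldiv_mul n (S.mul (S.mul x n) x)]
  exact isSubloop_nuc.2.2.1 _ hn _ hsq

lemma image_mul_left_nuc (h : ∀ x : Q, S.mul x x ∈ S.nuc) (x : Q) :
    (fun a => S.mul x a) '' S.nuc = (fun a => S.mul a x) '' S.nuc := by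
  apply Set.Subset.antisymm
  · rintro _ ⟨n, hn, rfl⟩
    have hm := isSubloop_nuc.2.2.2 _ (mul_mul_mem_nuc h x hn) _ (h x)
    refine ⟨_, hm, mul_right_cancel (S := S) (a := x) ?_⟩
    simp only [nuc_left hm, S.rdiv_mul]
  · rintro _ ⟨n, hn, rfl⟩
    have hm := isSubloop_nuc.2.2.1 _ (h x) _ (mul_mul_mem_nuc h x hn)
    refine ⟨_, hm, mul_left_cancel (S := S) (a := x) ?_⟩
    beta_reduce
    rw [← nuc_right hm, S.mul_ldiv, nuc_mid hn]

end LoopStr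

/-- In a loop with nuclear squares, the nucleus
`Nuc(Q) = Nuc_ℓ(Q) ∩ Nuc_m(Q) ∩ Nuc_r(Q)` is a normal subloop of `Q`. -/
theorem nuc_normal {Q : Type*} (S : LoopStr Q)
    (h : ∀ x : Q, S.mul x x ∈ S.lnuc ∩ S.mnuc ∩ S.rnuc) :
    S.IsNormalSubloop (S.lnuc ∩ S.mnuc ∩ S.rnuc) := by
  exact ⟨LoopStr.isSubloop_nuc, LoopStr.image_mul_left_nuc h,
    fun x y => Set.image_congr fun _ ha => LoopStr.nuc_mid ha x y,
    fun x y => Set.image_congr fun _ ha => (LoopStr.nuc_left ha x y).symm⟩
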